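/- arXiv:math/0509362 — 2 statements merged into one kernel-verified Lean document; each statement's English description precedes it below -/
import Mathlib

section
/- Let (W, S) be an arbitrary Coxeter system and let w ∈ W_c satisfy |𝓛(w)| = n(w) (respectively |𝓡(w)| = n(w)). Then if w is left (respectively right) star reducible to x, we have |𝓛(w)| = |𝓛(x)| and 𝓡(w) = 𝓡(x) (respectively |𝓡(w)| = |𝓡(x)| and 𝓛(w) = 𝓛(x)). -/
open CoxeterSystem

variable {B W : Type*} [Group W] {M : CoxeterMatrix B} (cs : CoxeterSystem M W)

/-- `m(s,t) ≥ 3`: `s` and `t` are distinct noncommuting generators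
(`M s t = 0` encodes `m(s,t) = ∞`). -/
def Noncomm (M : CoxeterMatrix B) (s t : B) : Prop := M s t = 0 ∨ 3 ≤ M s t

/-- The longest element `w_{st}` of the rank-2 parabolic subgroup `⟨s,t⟩`
(meaningful when `3 ≤ M s t < ∞`). -/
def longest (s t : B) : W := cs.wordProd (alternatingWord s t (M s t))

/-- `w` is complex: it admits a reduced factorization `x₁ · w_{st} · x₂` where `w_{st}`
is the longest element of a rank-2 parabolic subgroup `⟨s,t⟩` with `3 ≤ m(s,t) < ∞`. -/
def IsComplex (w : W) : Prop :=
  ∃ s t : B, 3 ≤ M s t ∧ ∃ x₁ x₂ : W,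
    w = x₁ * longest cs s t * x₂ ∧
    cs.length w = cs.length x₁ + cs.length (longest cs s t : W) + cs.length x₂

/-- `w` is fully commutative, i.e. `w ∈ W_c`. -/
def FullyComm (w : W) : Prop := ¬ IsComplex cs w

/-- `x` is weakly complex: `x` is complex and `x = s·u` reduced with `u` fully commutative. -/
def IsWeaklyComplex (x : W) : Prop :=
  IsComplex cs x ∧ ∃ (s : B) (u : W), FullyComm cs u ∧ x = cs.simple s * u ∧
    cs.length x = 1 + cs.length u

/-- The alternating product `t s t s ⋯` with `k` factors, beginning with `t`. -/
def altProd (t s : B) (k : ℕ) : W :=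
  cs.wordProd ((List.range k).map (fun i => if i % 2 = 0 then t else s))

/-- The left descent set `𝓛(w)`. -/
def leftDescents (w : W) : Set B := {i | cs.IsLeftDescent w i}

/-- The right descent set `𝓡(w)`. -/
def rightDescents (w : W) : Set B := {i | cs.IsRightDescent w i}

/-- `w` is a reduced product of distinct pairwise commuting generators. -/
def IsCommProd (w : W) : Prop :=
  ∃ l : List B, l.Nodup ∧ (∀ u ∈ l, ∀ u' ∈ l, u ≠ u' → M u u' = 2) ∧
    cs.IsReduced l ∧ w = cs.wordProd l

/-- `y` is left star reducible to `x` with respect to the pair `{s,t}`: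
`x` and `y` lie in the same left `{s,t}`-string and `ℓ(x) = ℓ(y) − 1`. -/
def LeftStarReducible (s t : B) (y x : W) : Prop :=
  Noncomm M s t ∧
  ((cs.IsLeftDescent y s ∧ ¬ cs.IsLeftDescent y t ∧ x = cs.simple s * y ∧
      cs.IsLeftDescent x t) ∨
   (cs.IsLeftDescent y t ∧ ¬ cs.IsLeftDescent y s ∧ x = cs.simple t * y ∧
      cs.IsLeftDescent x s))

/-- `y` is right star reducible to `x` with respect to the pair `{s,t}`. -/
def RightStarReducible (s t : B) (y x : W) : Prop :=
  Noncomm M s t ∧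
  ((cs.IsRightDescent y s ∧ ¬ cs.IsRightDescent y t ∧ x = y * cs.simple s ∧
      cs.IsRightDescent x t) ∨
   (cs.IsRightDescent y t ∧ ¬ cs.IsRightDescent y s ∧ x = y * cs.simple t ∧
      cs.IsRightDescent x s))

/-- `y` is star reducible to `x`: there is a (possibly empty) chain of left and right
star reductions from `y` to `x`. -/
def StarReducible (y x : W) : Prop :=
  Relation.ReflTransGen
    (fun a b => ∃ s t : B, LeftStarReducible cs s t a b ∨ RightStarReducible cs s t a b) y x

/-- Property F: every fully commutative element is star reducible to a reduced product of
distinct pairwise commuting generators. -/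
def PropertyF : Prop := ∀ w : W, FullyComm cs w → ∃ x : W, StarReducible cs w x ∧ IsCommProd cs x

/-- `n(w)`: the maximum `k` such that `w` admits a reduced factorization `w = w₁·w₂·w₃`
with `w₂` a reduced product of `k` distinct pairwise commuting generators. -/
noncomputable def nval (w : W) : ℕ :=
  sSup {k | ∃ w₁ w₂ w₃ : W, w = w₁ * w₂ * w₃ ∧
    cs.length w = cs.length w₁ + cs.length w₂ + cs.length w₃ ∧
    IsCommProd cs w₂ ∧ cs.length w₂ = k}

/-- The Bruhat order: `x ≤ w` iff some reduced word for `w` has a subword that is a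
reduced word for `x`. -/
def BruhatLE (x w : W) : Prop :=
  ∃ l l' : List B, cs.IsReduced l ∧ cs.wordProd l = w ∧
    l'.Sublist l ∧ cs.IsReduced l' ∧ cs.wordProd l' = x

/-- `w = wI · wII` is the coset decomposition of `w` with respect to `I = {s,t}`:
`wI ∈ W_I`, `𝓛(wII) ∩ I = ∅` and `ℓ(w) = ℓ(wI) + ℓ(wII)`. -/
def CosetDecompL (s t : B) (w wI wII : W) : Prop :=
  w = wI * wII ∧ wI ∈ Subgroup.closure {cs.simple s, cs.simple t} ∧
  ¬ cs.IsLeftDescent wII s ∧ ¬ cs.IsLeftDescent wII t ∧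
  cs.length w = cs.length wI + cs.length wII

/-- `w = wII · wI` is the right coset decomposition of `w` with respect to `I = {s,t}`:
`wI ∈ W_I`, `𝓡(wII) ∩ I = ∅` and `ℓ(w) = ℓ(wII) + ℓ(wI)`. -/
def CosetDecompR (s t : B) (w wII wI : W) : Prop :=
  w = wII * wI ∧ wI ∈ Subgroup.closure {cs.simple s, cs.simple t} ∧
  ¬ cs.IsRightDescent wII s ∧ ¬ cs.IsRightDescent wII t ∧
  cs.length w = cs.length wII + cs.length wI

/-- `k_ε(J) = (−1)^{|J ∩ ε⁻¹(0)|}` for a set `J` of generators. -/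
noncomputable def kSet (ε : B → Bool) (J : Set B) : ℤ :=
  (-1) ^ (J ∩ {i | ε i = false}).ncard

/-- `k_ε(w) = k_ε(𝓛(w)) · k_ε(𝓡(w))`. -/
noncomputable def kElt (ε : B → Bool) (w : W) : ℤ :=
  kSet ε (leftDescents cs w) * kSet ε (rightDescents cs w)

/-!
Order `W` by left factors of reduced products: `x ≤ w` when `ℓ(w) = ℓ(x) + ℓ(x⁻¹w)`. The exchange
condition says that if `s` is a left descent of `w` but not of `x ≤ w`, then `sx ≤ w`. It follows
that, when `s ∈ 𝓛(w)`, every other left descent of `w` survives in `sw`, so a left star reduction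
`w ↦ sw`, which also creates a descent `t`, cannot decrease the number of left descents.
Conversely, the left descents of a fully commutative element commute pairwise and their product is
a left factor of it, whence `|𝓛(sw)| ≤ n(sw) ≤ n(w) = |𝓛(w)|`. If some `r ∈ 𝓡(w)` is not in
`𝓡(sw)`, then `w = (sw)r` by the exchange condition, so `sw ≤ w` and `t` is a left descent of `w`, a
contradiction.

The exchange condition, and the fact that an alternating word in `s, t` of length at most `m(s,t)`
is reduced, come from two representations of `W`: signed conjugation, which counts the occurrences
of a reflection among the inversions of a word modulo 2, and the geometric representation, which
shows that `st` has order exactly `m(s,t)`.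
-/

section Order

open Polynomial.Chebyshev Module

theorem sin_two_pi_div_ne_zero {m : ℕ} (hm : 3 ≤ m) : Real.sin (2 * Real.pi / m) ≠ 0 := by
  have hm' : (3 : ℝ) ≤ m := by exact_mod_cast hm
  refine (Real.sin_pos_of_pos_of_lt_pi (by positivity) ?_).ne'
  rw [div_lt_iff₀ (by linarith)]
  nlinarith [Real.pi_pos]

theorem eval_S_two_mul_cos_two_pi_div_even {k : ℕ} (hk : 2 ≤ k) :
    (S ℝ (k - 1)).eval (2 * Real.cos (2 * Real.pi / (2 * k : ℕ))) = 0 := by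
  have hsin : Real.sin (2 * Real.pi / (2 * k : ℕ)) ≠ 0 := sin_two_pi_div_ne_zero (by lia)
  refine (mul_eq_zero.mp ?_).resolve_right hsin
  have hangle : (((k - 1 : ℤ) : ℝ) + 1) * (2 * Real.pi / (2 * k : ℕ)) = Real.pi := by
    have hk0 : (k : ℝ) ≠ 0 := by positivity
    push_cast
    field_simp
    ring
  rw [S_two_mul_real_cos, hangle, Real.sin_pi]

theorem eval_S_add_eval_S_two_mul_cos_two_pi_div_odd {k : ℕ} (hk : 1 ≤ k) :
    (S ℝ k).eval (2 * Real.cos (2 * Real.pi / (2 * k + 1 : ℕ))) +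
      (S ℝ (k - 1)).eval (2 * Real.cos (2 * Real.pi / (2 * k + 1 : ℕ))) = 0 := by
  have hsin : Real.sin (2 * Real.pi / (2 * k + 1 : ℕ)) ≠ 0 := sin_two_pi_div_ne_zero (by lia)
  refine (mul_eq_zero.mp ?_).resolve_right hsin
  have hangle : (((k : ℤ) : ℝ) + 1) * (2 * Real.pi / (2 * k + 1 : ℕ)) =
      2 * Real.pi - (((k - 1 : ℤ) : ℝ) + 1) * (2 * Real.pi / (2 * k + 1 : ℕ)) := by
    push_cast
    field_simp
    ring
  rw [add_mul, S_two_mul_real_cos, S_two_mul_real_cos, hangle, Real.sin_two_pi_sub, neg_add_cancel]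

/-- The hypotheses are the two coordinates of the equation `(sᵢ sⱼ)ⁿ αᵢ = αᵢ` in the geometric
representation, where `m = m(i,j)`. -/
theorem dvd_of_eval_S_two_mul_cos_two_pi_div {m n : ℕ}
    (hadd : (S ℝ n).eval (2 * Real.cos (2 * Real.pi / m)) +
      (S ℝ (n - 1)).eval (2 * Real.cos (2 * Real.pi / m)) = 1)
    (hmul : (S ℝ (n - 1)).eval (2 * Real.cos (2 * Real.pi / m)) * Real.cos (Real.pi / m) = 0) :
    m ∣ n := by
  obtain rfl | hm := Nat.eq_zero_or_pos m
  · simp_all [S_eval_two]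
  · have hC : (C ℝ n).eval (2 * Real.cos (2 * Real.pi / m)) = 2 := by
      have hcos : Real.cos (2 * Real.pi / m) = 2 * Real.cos (Real.pi / m) ^ 2 - 1 := by
        rw [mul_div_assoc, Real.cos_two_mul]
      rw [C_eq_S_sub_X_mul_S]
      simp only [Polynomial.eval_sub, Polynomial.eval_mul, Polynomial.eval_X,
        Polynomial.eval_ofNat]
      linear_combination 2 * hadd - 4 * Real.cos (Real.pi / m) * hmul -
        2 * (S ℝ (n - 1)).eval (2 * Real.cos (2 * Real.pi / m)) * hcos
    have hone : Real.cos ((n : ℤ) * (2 * Real.pi / m)) = 1 := by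
      rw [C_two_mul_real_cos] at hC
      linarith
    obtain ⟨k, hk⟩ := (Real.cos_eq_one_iff _).mp hone
    refine Int.natCast_dvd_natCast.mp ⟨k, ?_⟩
    have hk' : (n : ℝ) = m * k := by
      push_cast at hk
      field_simp at hk
      linarith
    exact_mod_cast hk'

/-- The simple coroot `αᵢ^∨` of the geometric representation, whose value at the simple root
`αⱼ = Finsupp.single j 1` is `-2 cos (π / m(i,j))`. The convention `π / 0 = 0` gives the value `-2`
when `m(i,j) = ∞`. -/
noncomputable def simpleCoroot (M : CoxeterMatrix B) (i : B) : Dual ℝ (B →₀ ℝ) :=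
  Finsupp.linearCombination ℝ fun j => -2 * Real.cos (Real.pi / M i j)

theorem simpleCoroot_single (i j : B) :
    simpleCoroot M i (Finsupp.single j 1) = -2 * Real.cos (Real.pi / M i j) := by
  simp [simpleCoroot]

theorem simpleCoroot_single_self (i : B) : simpleCoroot M i (Finsupp.single i 1) = 2 := by
  simp [simpleCoroot_single]

/-- The reflection in the simple root `αᵢ`, by which the generator `sᵢ` acts in the geometric
representation. -/
noncomputable def simpleReflection (M : CoxeterMatrix B) (i : B) :
    (B →₀ ℝ) ≃ₗ[ℝ] (B →₀ ℝ) :=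
  reflection (simpleCoroot_single_self (M := M) i)

theorem two_mul_cos_two_pi_div (i j : B) :
    2 * Real.cos (2 * Real.pi / M i j) = simpleCoroot M i (Finsupp.single j 1) *
      simpleCoroot M j (Finsupp.single i 1) - 2 := by
  rw [simpleCoroot_single, simpleCoroot_single, M.symmetric j i, mul_div_assoc, Real.cos_two_mul]
  ring

theorem simpleReflection_mul_sq_eq_one_of_eq_two {i j : B} (h : M i j = 2) :
    (simpleReflection M i * simpleReflection M j) ^ 2 = 1 := by
  have hij : simpleCoroot M i (Finsupp.single j 1) = 0 := by simp [simpleCoroot_single, h]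
  have hji : simpleCoroot M j (Finsupp.single i 1) = 0 := by
    simp [simpleCoroot_single, M.symmetric j i, h]
  ext1 z
  rw [pow_two]
  simp only [simpleReflection, LinearEquiv.mul_apply, reflection_apply, map_sub, map_smul, hij,
    hji, simpleCoroot_single_self, LinearEquiv.coe_one, id]
  module

theorem simpleReflection_mul_pow_eq_one_of_three_le {i j : B} (h : 3 ≤ M i j) :
    (simpleReflection M i * simpleReflection M j) ^ M i j = 1 := by
  ext1 z
  rw [simpleReflection, simpleReflection,
    reflection_mul_reflection_pow_apply _ _ _ _ _ (two_mul_cos_two_pi_div i j)]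
  generalize M i j = m at h
  obtain ⟨k, rfl | rfl⟩ := Nat.even_or_odd' m
  · have e₁ : (((2 * k : ℕ) : ℤ) - 2) / 2 = k - 1 := by lia
    have e₂ : (((2 * k : ℕ) : ℤ) - 1) / 2 = k - 1 := by lia
    simp only [e₁, e₂, eval_S_two_mul_cos_two_pi_div_even (show 2 ≤ k by lia), zero_mul, zero_smul,
      add_zero, LinearEquiv.coe_one, id]
  · have e₁ : (((2 * k + 1 : ℕ) : ℤ) - 2) / 2 = k - 1 := by lia
    have e₂ : (((2 * k + 1 : ℕ) : ℤ) - 1) / 2 = k := by lia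
    have e₃ : (((2 * k + 1 : ℕ) : ℤ) - 3) / 2 = k - 1 := by lia
    have e₄ : ((2 * k + 1 : ℕ) : ℤ) / 2 = k := by lia
    simp only [e₁, e₂, e₃, e₄, eval_S_add_eval_S_two_mul_cos_two_pi_div_odd (show 1 ≤ k by lia),
      mul_zero, zero_smul, add_zero, LinearEquiv.coe_one, id]

theorem simpleReflection_isLiftable (M : CoxeterMatrix B) :
    M.IsLiftable (simpleReflection M) := by
  intro i j
  obtain h | h | h | h : M i j = 0 ∨ M i j = 1 ∨ M i j = 2 ∨ 3 ≤ M i j := by lia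
  · rw [h, pow_zero]
  · obtain rfl : i = j := not_imp_comm.mp (M.off_diagonal i j) (not_not.mpr h)
    rw [h, pow_one]
    ext1 z
    exact involutive_reflection (simpleCoroot_single_self (M := M) i) z
  · rw [h, simpleReflection_mul_sq_eq_one_of_eq_two h]
  · exact simpleReflection_mul_pow_eq_one_of_three_le h

/-- The geometric (Tits) representation of a Coxeter group on the real vector space with basis the
simple roots. -/
noncomputable def geometricRepresentation : W →* ((B →₀ ℝ) ≃ₗ[ℝ] (B →₀ ℝ)) :=
  cs.lift ⟨simpleReflection M, simpleReflection_isLiftable M⟩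

theorem geometricRepresentation_simple (i : B) :
    geometricRepresentation cs (cs.simple i) = simpleReflection M i :=
  cs.lift_apply_simple _ i

theorem dvd_of_simple_mul_simple_pow_eq_one {i j : B} {n : ℕ}
    (h : (cs.simple i * cs.simple j) ^ n = 1) : M i j ∣ n := by
  obtain rfl | hne := eq_or_ne i j
  · simp
  have hcoroot : simpleCoroot M j (Finsupp.single i 1) = -2 * Real.cos (Real.pi / M i j) := by
    rw [simpleCoroot_single, M.symmetric j i]
  have hfix : ((simpleReflection M i * simpleReflection M j) ^ n) (Finsupp.single i 1) =
      Finsupp.single i 1 := by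
    rw [← geometricRepresentation_simple cs, ← geometricRepresentation_simple cs, ← map_mul,
      ← map_pow, h, map_one, LinearEquiv.coe_one, id]
  rw [simpleReflection, simpleReflection,
    reflection_mul_reflection_pow_apply_self _ _ _ _ (two_mul_cos_two_pi_div i j)] at hfix
  rw [hcoroot] at hfix
  have hi := DFunLike.congr_fun hfix i
  have hj := DFunLike.congr_fun hfix j
  simp only [Finsupp.add_apply, Finsupp.smul_apply, Finsupp.single_eq_same,
    Finsupp.single_eq_of_ne hne, Finsupp.single_eq_of_ne hne.symm, smul_eq_mul, mul_one, mul_zero,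
    add_zero, zero_add] at hi hj
  exact dvd_of_eval_S_two_mul_cos_two_pi_div hi (by linarith)

theorem orderOf_simple_mul_simple (i j : B) :
    orderOf (cs.simple i * cs.simple j) = M i j :=
  Nat.dvd_antisymm (orderOf_dvd_of_pow_eq_one (cs.simple_mul_simple_pow i j))
    (dvd_of_simple_mul_simple_pow_eq_one cs (pow_orderOf_eq_one _))

theorem simple_injective : Function.Injective cs.simple := by
  intro i j h
  refine not_imp_comm.mp (M.off_diagonal i j) (not_not.mpr ?_)
  rw [← orderOf_simple_mul_simple cs, h, simple_mul_simple_self, orderOf_one]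

end Order

section Exchange

open scoped Classical in
/-- The action of the generator `sᵢ` on `W × ℤ/2` by conjugation on `W`, with a sign change exactly
at `sᵢ`. The sign counts the passages through a given reflection modulo 2. -/
noncomputable def signedConj (i : B) : Equiv.Perm (W × ZMod 2) :=
  Function.Involutive.toPerm
    (fun p => (cs.simple i * p.1 * cs.simple i, p.2 + if p.1 = cs.simple i then 1 else 0)) <| by
  rintro ⟨t, ε⟩
  have hconj : cs.simple i * t * cs.simple i = cs.simple i ↔ t = cs.simple i := by
    rw [mul_eq_right, mul_eq_one_iff_inv_eq, inv_simple, eq_comm]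
  simp only [hconj, Prod.mk.injEq]
  constructor
  · simp [mul_assoc]
  · rw [add_assoc, CharTwo.add_self_eq_zero, add_zero]

open scoped Classical in
theorem signedConj_apply (i : B) (t : W) (ε : ZMod 2) :
    signedConj cs i (t, ε) =
      (cs.simple i * t * cs.simple i, ε + if t = cs.simple i then 1 else 0) := rfl

open scoped Classical in
theorem prod_map_signedConj_apply (ω : List B) (t : W) (ε : ZMod 2) :
    (ω.map (signedConj cs)).prod (t, ε) =
      (cs.wordProd ω * t * (cs.wordProd ω)⁻¹, ε + (cs.rightInvSeq ω).count t) := by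
  induction ω with
  | nil => simp
  | cons i ω ih =>
    have hcond : cs.wordProd ω * t * (cs.wordProd ω)⁻¹ = cs.simple i ↔
        (cs.wordProd ω)⁻¹ * cs.simple i * cs.wordProd ω = t := by
      rw [mul_inv_eq_iff_eq_mul, ← eq_inv_mul_iff_mul_eq, mul_assoc, eq_comm]
    rw [List.map_cons, List.prod_cons, Equiv.Perm.mul_apply, ih, signedConj_apply, wordProd_cons,
      rightInvSeq, List.count_cons]
    simp only [hcond, beq_iff_eq, Prod.mk.injEq]
    constructor
    · simp [mul_assoc]
    · push_cast
      ring

theorem prod_map_alternatingWord_two_mul {G : Type*} [Monoid G] (f : B → G) (i j : B) (k : ℕ) :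
    ((alternatingWord i j (2 * k)).map f).prod = (f i * f j) ^ k := by
  induction k with
  | zero => simp [alternatingWord]
  | succ k ih =>
    rw [mul_add_one, alternatingWord_succ', alternatingWord_succ', pow_succ', ← ih]
    simp [mul_assoc]

theorem reverse_alternatingWord (i j : B) (k : ℕ) :
    (alternatingWord i j k).reverse =
      if Even k then alternatingWord j i k else alternatingWord i j k := by
  induction k with
  | zero => simp [alternatingWord]
  | succ k ih =>
    conv_lhs => rw [alternatingWord_succ', List.reverse_cons, ih]
    by_cases hk : Even k <;> simp [hk, Nat.even_add_one, alternatingWord_succ]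

theorem leftInvSeq_alternatingWord (i j : B) (k : ℕ) :
    cs.leftInvSeq (alternatingWord i j k) = (List.range k).map fun n =>
      if Even k then cs.simple i * (cs.simple j * cs.simple i) ^ n
      else cs.simple j * (cs.simple i * cs.simple j) ^ n := by
  induction k with
  | zero => simp [alternatingWord]
  | succ k ih =>
    rw [alternatingWord_succ', leftInvSeq, ih, List.range_succ_eq_map, List.map_cons, List.map_map,
      List.map_map]
    have hconj (a b : B) (n : ℕ) :
        MulAut.conj (cs.simple a) (cs.simple b * (cs.simple a * cs.simple b) ^ n) =
          cs.simple a * (cs.simple b * cs.simple a) ^ (n + 1) := by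
      rw [MulAut.conj_apply, inv_simple, ← mul_pow_mul, pow_succ]
      simp only [mul_assoc]
    by_cases hk : Even k <;> simp [hk, Nat.even_add_one, hconj]

open scoped Classical in
theorem even_count_leftInvSeq_alternatingWord (i j : B) (t : W) :
    Even ((cs.leftInvSeq (alternatingWord i j (2 * M i j))).count t) := by
  have hperiod (n : ℕ) : (cs.simple j * cs.simple i) ^ (M i j + n) =
      (cs.simple j * cs.simple i) ^ n := by
    rw [pow_add, simple_mul_simple_pow', one_mul]
  rw [leftInvSeq_alternatingWord]
  simp only [even_two_mul, if_true]
  rw [two_mul, List.range_add, List.map_append, List.map_map]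
  simp only [Function.comp_def, hperiod, List.count_append]
  exact Even.add_self _

theorem signedConj_isLiftable : M.IsLiftable (signedConj cs) := by
  classical
  intro i j
  ext1 ⟨t, ε⟩
  have hcount : ((cs.rightInvSeq (alternatingWord i j (2 * M i j))).count t : ZMod 2) = 0 := by
    have hrev := reverse_alternatingWord j i (2 * M i j)
    rw [if_pos (even_two_mul _)] at hrev
    rw [← hrev, rightInvSeq_reverse, List.count_reverse,
      M.symmetric i j, ZMod.natCast_eq_zero_iff_even]
    exact even_count_leftInvSeq_alternatingWord cs j i t
  rw [← prod_map_alternatingWord_two_mul, prod_map_signedConj_apply, hcount, wordProd,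
    prod_map_alternatingWord_two_mul]
  simp

/-- The signed conjugation action of `W` on `W × ℤ/2`. -/
noncomputable def signedConjHom : W →* Equiv.Perm (W × ZMod 2) :=
  cs.lift ⟨signedConj cs, signedConj_isLiftable cs⟩

theorem signedConjHom_wordProd (ω : List B) :
    signedConjHom cs (cs.wordProd ω) = (ω.map (signedConj cs)).prod := by
  rw [wordProd, map_list_prod, List.map_map]
  congr 2
  exact funext fun i => cs.lift_apply_simple _ i

open scoped Classical in
theorem count_leftInvSeq_eq {ω ω' : List B} (h : cs.wordProd ω = cs.wordProd ω') (t : W) :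
    ((cs.leftInvSeq ω).count t : ZMod 2) = (cs.leftInvSeq ω').count t := by
  have hprod : (ω.reverse.map (signedConj cs)).prod (t, 0) =
      (ω'.reverse.map (signedConj cs)).prod (t, 0) := by
    rw [← signedConjHom_wordProd, ← signedConjHom_wordProd, wordProd_reverse, wordProd_reverse, h]
  simpa only [prod_map_signedConj_apply, rightInvSeq_reverse, List.count_reverse, zero_add]
    using congrArg Prod.snd hprod

theorem leftInvSeq_subset_of_nodup {ω ω' : List B} (h : cs.wordProd ω = cs.wordProd ω')
    (hω : (cs.leftInvSeq ω).Nodup) : cs.leftInvSeq ω ⊆ cs.leftInvSeq ω' := by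
  classical
  intro t ht
  by_contra hnot
  have hcount := count_leftInvSeq_eq cs h t
  rw [List.count_eq_one_of_mem hω ht, List.count_eq_zero_of_not_mem hnot] at hcount
  simp at hcount

theorem isReduced_of_nodup_leftInvSeq {ω : List B} (hω : (cs.leftInvSeq ω).Nodup) :
    cs.IsReduced ω := by
  obtain ⟨υ, hυ, hprod⟩ := cs.exists_isReduced (cs.wordProd ω)
  refine le_antisymm (cs.length_wordProd_le ω) ?_
  have hle := (hω.subperm (leftInvSeq_subset_of_nodup cs hprod hω)).length_le
  rwa [length_leftInvSeq, length_leftInvSeq, ← hυ.eq, ← hprod] at hle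

theorem mem_leftInvSeq_of_isLeftDescent {ω : List B} {i : B}
    (h : cs.IsLeftDescent (cs.wordProd ω) i) : cs.simple i ∈ cs.leftInvSeq ω := by
  obtain ⟨υ, hυ, hprod⟩ := cs.exists_isReduced (cs.simple i * cs.wordProd ω)
  have hcons : cs.wordProd (i :: υ) = cs.wordProd ω := by
    rw [wordProd_cons, ← hprod, simple_mul_simple_cancel_left]
  have hred : cs.IsReduced (i :: υ) := by
    rw [CoxeterSystem.IsReduced, hcons, List.length_cons, ← hυ.eq, ← hprod]
    exact ((cs.isLeftDescent_iff).mp h).symm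
  exact leftInvSeq_subset_of_nodup cs hcons hred.nodup_leftInvSeq List.mem_cons_self

theorem leftInvSeq_append (α β : List B) :
    cs.leftInvSeq (α ++ β) =
      cs.leftInvSeq α ++ (cs.leftInvSeq β).map (MulAut.conj (cs.wordProd α)) := by
  induction α with
  | nil => simp [leftInvSeq]
  | cons i α ih => simp [leftInvSeq, ih, wordProd_cons, Function.comp_def, mul_assoc]

theorem isReduced_alternatingWord {i j : B} {k : ℕ} (hk : M i j = 0 ∨ k ≤ M i j) :
    cs.IsReduced (alternatingWord i j k) := by
  have hinj {x y z : W} (hxy : orderOf (x * y) = M i j) {m n : ℕ} (hm : m < k) (hn : n < k)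
      (h : z * (x * y) ^ m = z * (x * y) ^ n) : m = n := by
    rw [mul_right_inj, pow_eq_pow_iff_modEq, hxy] at h
    obtain h0 | hk := hk
    · rwa [h0, Nat.modEq_zero_iff] at h
    · exact h.eq_of_lt_of_lt (hm.trans_le hk) (hn.trans_le hk)
  refine isReduced_of_nodup_leftInvSeq cs ?_
  rw [leftInvSeq_alternatingWord]
  refine List.nodup_range.map_on fun m hm n hn h => ?_
  rw [List.mem_range] at hm hn
  split_ifs at h
  · exact hinj ((orderOf_simple_mul_simple cs j i).trans (M.symmetric j i)) hm hn h
  · exact hinj (orderOf_simple_mul_simple cs i j) hm hn h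

end Exchange

section Commuting

theorem simple_mul_simple_comm {i j : B} (h : M i j = 2) :
    cs.simple i * cs.simple j = cs.simple j * cs.simple i := by
  have hsq := cs.simple_mul_simple_pow i j
  rw [h, pow_two, mul_eq_one_iff_inv_eq] at hsq
  rw [← hsq, mul_inv_rev, inv_simple, inv_simple]

theorem leftInvSeq_eq_map_simple {l : List B} (hl : l.Nodup)
    (hcomm : ∀ u ∈ l, ∀ u' ∈ l, u ≠ u' → M u u' = 2) :
    cs.leftInvSeq l = l.map cs.simple := by
  induction l with
  | nil => simp
  | cons i l ih =>
    rw [List.nodup_cons] at hl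
    have hih := ih hl.2 fun u hu u' hu' =>
      hcomm u (List.mem_cons_of_mem i hu) u' (List.mem_cons_of_mem i hu')
    rw [leftInvSeq, hih, List.map_cons, List.map_map]
    refine congrArg (cs.simple i :: ·) (List.map_congr_left fun j hj => ?_)
    have hij : M i j = 2 :=
      hcomm i List.mem_cons_self j (List.mem_cons_of_mem i hj) (ne_of_mem_of_not_mem hj hl.1).symm
    rw [Function.comp_apply, MulAut.conj_apply, simple_mul_simple_comm cs hij,
      mul_inv_cancel_right]

theorem isReduced_of_commute {l : List B} (hl : l.Nodup)
    (hcomm : ∀ u ∈ l, ∀ u' ∈ l, u ≠ u' → M u u' = 2) : cs.IsReduced l := by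
  refine isReduced_of_nodup_leftInvSeq cs ?_
  rw [leftInvSeq_eq_map_simple cs hl hcomm]
  exact hl.map (simple_injective cs)

end Commuting

section WeakOrder

/-- The right weak order on a Coxeter group: `x ≤ w` when `w = x * y` is a reduced product for some
`y`, which is then `x⁻¹ * w`. -/
def RightWeakLE (x w : W) : Prop := cs.length x + cs.length (x⁻¹ * w) = cs.length w

variable {cs}

theorem rightWeakLE_of_length_add_length_le {x w : W}
    (h : cs.length x + cs.length (x⁻¹ * w) ≤ cs.length w) : RightWeakLE cs x w :=
  le_antisymm h (by simpa using cs.length_mul_le x (x⁻¹ * w))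

theorem rightWeakLE_mul {x y : W} (h : cs.length (x * y) = cs.length x + cs.length y) :
    RightWeakLE cs x (x * y) := by
  rw [RightWeakLE, inv_mul_cancel_left, h]

theorem rightWeakLE_one (w : W) : RightWeakLE cs 1 w := by
  simp [RightWeakLE]

theorem rightWeakLE_simple_iff {w : W} {i : B} :
    RightWeakLE cs (cs.simple i) w ↔ cs.IsLeftDescent w i := by
  rw [RightWeakLE, length_simple, inv_simple, isLeftDescent_iff, add_comm]

theorem RightWeakLE.trans {x y w : W} (hxy : RightWeakLE cs x y) (hyw : RightWeakLE cs y w) :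
    RightWeakLE cs x w := by
  refine rightWeakLE_of_length_add_length_le ?_
  have hle := cs.length_mul_le (x⁻¹ * y) (y⁻¹ * w)
  rw [mul_assoc, mul_inv_cancel_left] at hle
  rw [RightWeakLE] at hxy hyw
  lia

theorem RightWeakLE.eq_of_length_le {x w : W} (h : RightWeakLE cs x w)
    (hle : cs.length w ≤ cs.length x) : x = w := by
  rw [RightWeakLE] at h
  rw [← inv_mul_eq_one, ← cs.length_eq_zero_iff]
  lia

theorem RightWeakLE.simple_mul {x w : W} {i : B} (h : RightWeakLE cs x w)
    (hw : cs.IsLeftDescent w i) (hx : ¬ cs.IsLeftDescent x i) :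
    RightWeakLE cs (cs.simple i * x) w := by
  obtain ⟨α, hα, rfl⟩ := cs.exists_isReduced x
  obtain ⟨β, hβ, hβw⟩ := cs.exists_isReduced ((cs.wordProd α)⁻¹ * w)
  have hmem : cs.simple i ∈ cs.leftInvSeq (α ++ β) := by
    refine mem_leftInvSeq_of_isLeftDescent cs ?_
    rwa [wordProd_append, ← hβw, mul_inv_cancel_left]
  rw [leftInvSeq_append, List.mem_append, List.mem_map] at hmem
  obtain hiα | ⟨t, ht, hti⟩ := hmem
  · exact absurd (cs.isLeftInversion_of_mem_leftInvSeq hα hiα).2 hx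
  · have hlt := (cs.isLeftInversion_of_mem_leftInvSeq hβ ht).2
    have hquot : (cs.simple i * cs.wordProd α)⁻¹ * w = t * cs.wordProd β := by
      rw [mul_inv_rev, ← hti, ← map_inv, (cs.isReflection_of_mem_leftInvSeq β ht).inv, ← hβw,
        MulAut.conj_apply]
      group
    refine rightWeakLE_of_length_add_length_le ?_
    have hle := cs.length_mul_le (cs.simple i) (cs.wordProd α)
    rw [length_simple] at hle
    rw [RightWeakLE, hβw] at h
    rw [hquot]
    lia

theorem RightWeakLE.of_simple_mul {x w : W} {i : B} (h : RightWeakLE cs (cs.simple i * x) w)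
    (hx : ¬ cs.IsLeftDescent x i) : RightWeakLE cs x (cs.simple i * w) := by
  refine rightWeakLE_of_length_add_length_le ?_
  have hle := cs.length_mul_le (cs.simple i) (cs.simple i * w)
  rw [simple_mul_simple_cancel_left, length_simple] at hle
  rw [not_isLeftDescent_iff] at hx
  rw [RightWeakLE, hx, mul_inv_rev, inv_simple, mul_assoc] at h
  lia

theorem rightWeakLE_wordProd {w : W} {ω : List B} (hω : cs.IsReduced ω)
    (h : ∀ i ∈ ω, cs.IsLeftDescent w i) : RightWeakLE cs (cs.wordProd ω) w := by
  induction ω with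
  | nil => exact rightWeakLE_one w
  | cons i ω ih =>
    have hωtail : cs.IsReduced ω := hω.drop 1
    have hi : ¬ cs.IsLeftDescent (cs.wordProd ω) i := by
      rw [not_isLeftDescent_iff, ← wordProd_cons, hω.eq, hωtail.eq, List.length_cons]
    rw [wordProd_cons]
    exact (ih hωtail fun j hj => h j (List.mem_cons_of_mem i hj)).simple_mul
      (h i List.mem_cons_self) hi

end WeakOrder

section Descents

variable {cs}

theorem isLeftDescent_simple_iff {i j : B} : cs.IsLeftDescent (cs.simple j) i ↔ i = j := by
  rw [CoxeterSystem.IsLeftDescent, length_simple, Nat.lt_one_iff, length_eq_zero_iff,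
    mul_eq_one_iff_eq_inv, inv_simple, (simple_injective cs).eq_iff]

theorem leftDescents_finite (w : W) : (leftDescents cs w).Finite := by
  obtain ⟨ω, -, rfl⟩ := cs.exists_isReduced w
  exact ((List.finite_toSet (cs.leftInvSeq ω)).preimage (simple_injective cs).injOn).subset
    fun _ => mem_leftInvSeq_of_isLeftDescent cs

theorem leftDescents_sdiff_singleton_subset {w : W} {s : B} (hs : cs.IsLeftDescent w s) :
    leftDescents cs w \ {s} ⊆ leftDescents cs (cs.simple s * w) := by
  rintro u ⟨hu, hus⟩
  have hsu : ¬ cs.IsLeftDescent (cs.simple u) s := fun h =>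
    hus (isLeftDescent_simple_iff.mp h).symm
  exact rightWeakLE_simple_iff.mp
    (((rightWeakLE_simple_iff.mpr hu).simple_mul hs hsu).of_simple_mul hsu)

theorem ncard_leftDescents_le {w : W} {s t : B} (hs : cs.IsLeftDescent w s)
    (ht : ¬ cs.IsLeftDescent w t) (hst : cs.IsLeftDescent (cs.simple s * w) t) :
    (leftDescents cs w).ncard ≤ (leftDescents cs (cs.simple s * w)).ncard := by
  have hsub : insert t (leftDescents cs w \ {s}) ⊆ leftDescents cs (cs.simple s * w) :=
    Set.insert_subset hst (leftDescents_sdiff_singleton_subset hs)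
  calc (leftDescents cs w).ncard
      = (leftDescents cs w \ {s}).ncard + 1 :=
        (Set.ncard_sdiff_singleton_add_one (show s ∈ leftDescents cs w from hs)
          (leftDescents_finite w)).symm
    _ = (insert t (leftDescents cs w \ {s})).ncard :=
        (Set.ncard_insert_of_notMem (fun h => ht h.1) (leftDescents_finite w).sdiff).symm
    _ ≤ (leftDescents cs (cs.simple s * w)).ncard :=
        Set.ncard_le_ncard hsub (leftDescents_finite _)

theorem simple_mul_eq_mul_simple {x : W} {s r : B} (hx : ¬ cs.IsRightDescent x r)
    (hsx : cs.IsRightDescent (cs.simple s * x) r) : cs.simple s * x = x * cs.simple r := by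
  rw [not_isRightDescent_iff] at hx
  rw [isRightDescent_iff, mul_assoc] at hsx
  have hle := cs.length_mul_le (cs.simple s) x
  have hle' := cs.length_mul_le (cs.simple s) (cs.simple s * (x * cs.simple r))
  rw [simple_mul_simple_cancel_left] at hle'
  rw [length_simple] at hle hle'
  have hsr : cs.IsLeftDescent (x * cs.simple r) s := by
    rw [isLeftDescent_iff]
    lia
  have hs : ¬ cs.IsLeftDescent x s := by
    rw [not_isLeftDescent_iff]
    lia
  refine ((rightWeakLE_mul ?_).simple_mul hsr hs).eq_of_length_le ?_
  · rw [hx, length_simple]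
  · lia

theorem rightDescents_simple_mul {w : W} {s t : B} (hs : cs.IsLeftDescent w s)
    (ht : ¬ cs.IsLeftDescent w t) (hst : cs.IsLeftDescent (cs.simple s * w) t) :
    rightDescents cs (cs.simple s * w) = rightDescents cs w := by
  rw [isLeftDescent_iff] at hs
  refine Set.Subset.antisymm (fun r hr => ?_) fun r hr => ?_
  · have hrlen : cs.length (cs.simple s * w * cs.simple r) + 1 = cs.length (cs.simple s * w) :=
      cs.isRightDescent_iff.mp hr
    have hle := cs.length_mul_le (cs.simple s) (cs.simple s * w * cs.simple r)
    rw [mul_assoc, simple_mul_simple_cancel_left, ← mul_assoc, length_simple] at hle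
    change cs.length (w * cs.simple r) < cs.length w
    lia
  · by_contra hrs
    have hr' : cs.IsRightDescent (cs.simple s * (cs.simple s * w)) r := by
      rwa [simple_mul_simple_cancel_left]
    have hexch : cs.simple s * w * cs.simple r = w := by
      rw [← simple_mul_eq_mul_simple hrs hr', simple_mul_simple_cancel_left]
    have hweak : RightWeakLE cs (cs.simple s * w) (cs.simple s * w * cs.simple r) :=
      rightWeakLE_mul (by rw [hexch, length_simple, hs])
    rw [hexch] at hweak
    exact ht (rightWeakLE_simple_iff.mp ((rightWeakLE_simple_iff.mpr hst).trans hweak))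

end Descents

section FullyCommutative

variable {cs}

theorem IsComplex.mul_left {x y : W} (hy : IsComplex cs y)
    (h : cs.length (x * y) = cs.length x + cs.length y) : IsComplex cs (x * y) := by
  obtain ⟨s, t, hst, y₁, y₂, rfl, hlen⟩ := hy
  refine ⟨s, t, hst, x * y₁, y₂, by simp only [mul_assoc], ?_⟩
  have hle₁ := cs.length_mul_le x y₁
  have hle₂ := cs.length_mul_le (x * y₁) (longest cs s t)
  have hle₃ := cs.length_mul_le (x * y₁ * longest cs s t) y₂
  simp only [mul_assoc] at hle₂ hle₃ h hlen ⊢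
  lia

theorem isComplex_of_longest_rightWeakLE {w : W} {s t : B} (hst : 3 ≤ M s t)
    (h : RightWeakLE cs (longest cs s t) w) : IsComplex cs w :=
  ⟨s, t, hst, 1, (longest cs s t)⁻¹ * w, by group, by rw [length_one, zero_add, h]⟩

theorem rightWeakLE_alternatingWord {w : W} {s t : B} {k : ℕ} (hs : cs.IsLeftDescent w s)
    (ht : cs.IsLeftDescent w t) (hk : M s t = 0 ∨ k ≤ M s t) :
    RightWeakLE cs (cs.wordProd (alternatingWord s t k)) w := by
  refine rightWeakLE_wordProd (isReduced_alternatingWord cs hk) fun i hi => ?_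
  obtain ⟨n, hn, rfl⟩ := List.mem_iff_getElem.mp hi
  rw [length_alternatingWord] at hn
  rw [getElem_alternatingWord _ _ _ _ hn]
  split_ifs
  · exact hs
  · exact ht

theorem ne_zero_of_isLeftDescent {w : W} {s t : B} (hs : cs.IsLeftDescent w s)
    (ht : cs.IsLeftDescent w t) : M s t ≠ 0 := by
  intro h0
  have hred := isReduced_alternatingWord cs (k := cs.length w + 1) (Or.inl h0)
  have hle := rightWeakLE_alternatingWord (k := cs.length w + 1) hs ht (Or.inl h0)
  rw [RightWeakLE, hred.eq, length_alternatingWord] at hle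
  lia

theorem FullyComm.eq_two_of_isLeftDescent {w : W} (hw : FullyComm cs w) {s t : B} (hne : s ≠ t)
    (hs : cs.IsLeftDescent w s) (ht : cs.IsLeftDescent w t) : M s t = 2 := by
  have h0 := ne_zero_of_isLeftDescent hs ht
  have h1 := M.off_diagonal s t hne
  have h3 : ¬ 3 ≤ M s t := fun h3 => hw <|
    isComplex_of_longest_rightWeakLE h3 (rightWeakLE_alternatingWord hs ht (Or.inr le_rfl))
  lia

theorem le_nval {w₁ w₂ w₃ : W}
    (hlen : cs.length (w₁ * w₂ * w₃) = cs.length w₁ + cs.length w₂ + cs.length w₃)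
    (h : IsCommProd cs w₂) : cs.length w₂ ≤ nval cs (w₁ * w₂ * w₃) := by
  refine le_csSup ⟨cs.length (w₁ * w₂ * w₃), ?_⟩ ⟨w₁, w₂, w₃, rfl, hlen, h, rfl⟩
  rintro k ⟨_, _, _, -, hlen', -, rfl⟩
  lia

theorem nval_le_nval_mul {x y : W} (h : cs.length (x * y) = cs.length x + cs.length y) :
    nval cs y ≤ nval cs (x * y) := by
  refine csSup_le' ?_
  rintro _ ⟨y₁, y₂, y₃, rfl, hlen, hy₂, rfl⟩
  have hassoc : x * (y₁ * y₂ * y₃) = x * y₁ * y₂ * y₃ := by simp only [mul_assoc]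
  rw [hassoc] at h ⊢
  refine le_nval (le_antisymm ?_ ?_) hy₂
  · have hle₁ := cs.length_mul_le (x * y₁ * y₂) y₃
    have hle₂ := cs.length_mul_le (x * y₁) y₂
    lia
  · have hle := cs.length_mul_le x y₁
    lia

theorem FullyComm.ncard_leftDescents_le_nval {w : W} (hw : FullyComm cs w) :
    (leftDescents cs w).ncard ≤ nval cs w := by
  set l := (leftDescents_finite (cs := cs) w).toFinset.toList with hl
  have hmem : ∀ u ∈ l, cs.IsLeftDescent w u := fun u hu => by
    simpa [hl, leftDescents] using hu
  have hcomm : ∀ u ∈ l, ∀ u' ∈ l, u ≠ u' → M u u' = 2 := fun u hu u' hu' hne =>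
    hw.eq_two_of_isLeftDescent hne (hmem u hu) (hmem u' hu')
  have hred : cs.IsReduced l := isReduced_of_commute cs (Finset.nodup_toList _) hcomm
  have hle : RightWeakLE cs (cs.wordProd l) w := rightWeakLE_wordProd hred hmem
  have hfactor : 1 * cs.wordProd l * ((cs.wordProd l)⁻¹ * w) = w := by group
  calc (leftDescents cs w).ncard
      = l.length := by
        rw [hl, Finset.length_toList, Set.ncard_eq_toFinset_card _ (leftDescents_finite w)]
    _ = cs.length (cs.wordProd l) := hred.eq.symm
    _ ≤ nval cs (1 * cs.wordProd l * ((cs.wordProd l)⁻¹ * w)) :=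
        le_nval (by rw [hfactor, length_one, zero_add, hle])
          ⟨l, Finset.nodup_toList _, hcomm, hred, rfl⟩
    _ = nval cs w := by rw [hfactor]

end FullyCommutative

section StarReduction

variable {cs} {w x : W} {s t : B}

theorem LeftStarReducible.exists_isLeftDescent (h : LeftStarReducible cs s t w x) :
    ∃ u v, cs.IsLeftDescent w u ∧ ¬ cs.IsLeftDescent w v ∧ x = cs.simple u * w ∧
      cs.IsLeftDescent x v :=
  h.2.elim (fun h => ⟨s, t, h⟩) fun h => ⟨t, s, h⟩

theorem FullyComm.ncard_leftDescents_eq (hw : FullyComm cs w)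
    (hn : (leftDescents cs w).ncard = nval cs w) (h : LeftStarReducible cs s t w x) :
    (leftDescents cs w).ncard = (leftDescents cs x).ncard := by
  obtain ⟨u, v, hu, hv, rfl, huv⟩ := h.exists_isLeftDescent
  have hlen : cs.length (cs.simple u * (cs.simple u * w)) =
      cs.length (cs.simple u) + cs.length (cs.simple u * w) := by
    rw [simple_mul_simple_cancel_left, length_simple, add_comm, cs.isLeftDescent_iff.mp hu]
  have hx : FullyComm cs (cs.simple u * w) := fun hc =>
    hw (by simpa only [simple_mul_simple_cancel_left] using hc.mul_left hlen)
  refine le_antisymm (ncard_leftDescents_le hu hv huv) ?_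
  calc (leftDescents cs (cs.simple u * w)).ncard
      ≤ nval cs (cs.simple u * w) := hx.ncard_leftDescents_le_nval
    _ ≤ nval cs (cs.simple u * (cs.simple u * w)) := nval_le_nval_mul hlen
    _ = nval cs w := by rw [simple_mul_simple_cancel_left]
    _ = (leftDescents cs w).ncard := hn.symm

theorem LeftStarReducible.rightDescents_eq (h : LeftStarReducible cs s t w x) :
    rightDescents cs w = rightDescents cs x := by
  obtain ⟨u, v, hu, hv, rfl, huv⟩ := h.exists_isLeftDescent
  exact (rightDescents_simple_mul hu hv huv).symm

end StarReduction

section Inverse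

variable (s t : B) {cs} {w x : W}

theorem longest_inv : (longest cs s t)⁻¹ = longest cs s t := by
  rw [longest, ← wordProd_reverse, reverse_alternatingWord]
  split_ifs
  · simpa only [braidWord, M.symmetric t s] using cs.wordProd_braidWord_eq t s
  · rfl

theorem IsComplex.inv (h : IsComplex cs w) : IsComplex cs w⁻¹ := by
  obtain ⟨s, t, hst, x₁, x₂, rfl, hlen⟩ := h
  refine ⟨s, t, hst, x₂⁻¹, x₁⁻¹, ?_, ?_⟩
  · rw [mul_inv_rev, mul_inv_rev, longest_inv, mul_assoc]
  · rw [length_inv, length_inv, length_inv, hlen]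
    ring

theorem FullyComm.inv (h : FullyComm cs w) : FullyComm cs w⁻¹ :=
  fun hc => h (by simpa using hc.inv)

theorem IsCommProd.inv (h : IsCommProd cs w) : IsCommProd cs w⁻¹ := by
  obtain ⟨l, hl, hcomm, hred, rfl⟩ := h
  exact ⟨l.reverse, List.nodup_reverse.mpr hl, by simpa using hcomm, hred.reverse,
    (cs.wordProd_reverse l).symm⟩

theorem nval_le_nval_inv (w : W) : nval cs w ≤ nval cs w⁻¹ := by
  refine csSup_le' ?_
  rintro _ ⟨w₁, w₂, w₃, rfl, hlen, hw₂, rfl⟩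
  have hinv : (w₁ * w₂ * w₃)⁻¹ = w₃⁻¹ * w₂⁻¹ * w₁⁻¹ := by group
  rw [hinv, ← cs.length_inv w₂]
  refine le_nval ?_ hw₂.inv
  rw [← hinv, length_inv, length_inv, length_inv, length_inv, hlen]
  ring

theorem nval_inv (w : W) : nval cs w⁻¹ = nval cs w :=
  le_antisymm (by simpa using nval_le_nval_inv (cs := cs) w⁻¹) (nval_le_nval_inv w)

theorem leftDescents_inv (w : W) : leftDescents cs w⁻¹ = rightDescents cs w :=
  Set.ext fun _ => cs.isLeftDescent_inv_iff

theorem rightDescents_inv (w : W) : rightDescents cs w⁻¹ = leftDescents cs w :=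
  Set.ext fun _ => cs.isRightDescent_inv_iff

theorem RightStarReducible.inv (h : RightStarReducible cs s t w x) :
    LeftStarReducible cs s t w⁻¹ x⁻¹ := by
  refine ⟨h.1, ?_⟩
  simp only [isLeftDescent_inv_iff]
  exact h.2.imp (fun ⟨hs, ht, hx, hxt⟩ => ⟨hs, ht, by simp [hx], hxt⟩)
    fun ⟨ht, hs, hx, hxs⟩ => ⟨ht, hs, by simp [hx], hxs⟩

end Inverse

/-- Lemma 7.4: suppose `w ∈ W_c` satisfies `|𝓛(w)| = n(w)` (respectively
`|𝓡(w)| = n(w)`).  Then if `w` is left (respectively right) star reducible to `x`, we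
have `|𝓛(w)| = |𝓛(x)|` and `𝓡(w) = 𝓡(x)` (respectively `|𝓡(w)| = |𝓡(x)|` and
`𝓛(w) = 𝓛(x)`). -/
theorem statement9 (w : W) (hw : FullyComm cs w) :
    (((leftDescents cs w).ncard = nval cs w) →
      ∀ (x : W) (s t : B), LeftStarReducible cs s t w x →
        (leftDescents cs w).ncard = (leftDescents cs x).ncard ∧
        rightDescents cs w = rightDescents cs x) ∧
    (((rightDescents cs w).ncard = nval cs w) →
      ∀ (x : W) (s t : B), RightStarReducible cs s t w x →
        (rightDescents cs w).ncard = (rightDescents cs x).ncard ∧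
        leftDescents cs w = leftDescents cs x) := by
  refine ⟨fun hn x s t h => ⟨hw.ncard_leftDescents_eq hn h, h.rightDescents_eq⟩,
    fun hn x s t h => ?_⟩
  rw [← leftDescents_inv, ← nval_inv] at hn
  rw [← leftDescents_inv, ← leftDescents_inv, ← rightDescents_inv w, ← rightDescents_inv x]
  exact ⟨hw.inv.ncard_leftDescents_eq hn h.inv, h.inv.rightDescents_eq⟩
end

section
/- Let δ = v + v⁻¹ in the ring ℤ[v, v⁻¹] of Laurent polynomials over ℤ. Suppose f ∈ ℤ[v, v⁻¹] is such that δⁿ·f = g(δ) for some integer n ≥ 0 and some polynomial g ∈ ℤ[X] with nonnegative coefficients. Then f = h(δ) for some polynomial h ∈ ℤ[X] with nonnegative coefficients. (Equivalently, as subsets of ℚ(v), ℤ^{≥0}[δ, δ⁻¹] ∩ ℤ[v, v⁻¹] = ℤ^{≥0}[δ].) -/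
open LaurentPolynomial

/-! The element `δ` is not a monomial, and a product of a non-monomial with a nonzero Laurent
polynomial always has two distinct extreme terms. Hence `δ` divides no nonzero constant. Reducing
`δ ^ n * f = g(δ)` modulo `δ` thus shows that `g` has no constant term, and after cancelling one
factor `δ` the same applies to `g / X`. In the end `X ^ n` divides `g`, so the coefficients of
`h = g / X ^ n` are among those of `g`. -/

section Aeval

open Polynomial

variable {R A : Type*} [CommRing R] [Ring A] [Algebra R A] {x : A}

theorem X_dvd_of_dvd_aeval (hconst : ∀ r : R, x ∣ algebraMap R A r → r = 0) {g : R[X]}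
    (hg : x ∣ aeval x g) : X ∣ g := by
  refine X_dvd_iff.mpr (hconst _ ?_)
  rw [← X_mul_divX_add g, map_add, map_mul, aeval_X, aeval_C] at hg
  exact (dvd_add_right (dvd_mul_right x _)).mp hg

theorem X_pow_dvd_of_pow_dvd_aeval (hx : IsLeftRegular x)
    (hconst : ∀ r : R, x ∣ algebraMap R A r → r = 0) {n : ℕ} {g : R[X]}
    (hg : x ^ n ∣ aeval x g) : X ^ n ∣ g := by
  induction n generalizing g with
  | zero => simp
  | succ n ih =>
    obtain ⟨h, rfl⟩ := X_dvd_of_dvd_aeval hconst ((dvd_pow_self x n.succ_ne_zero).trans hg)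
    obtain ⟨a, ha⟩ := hg
    rw [map_mul, aeval_X, pow_succ', mul_assoc] at ha
    rw [pow_succ']
    exact mul_dvd_mul_left X (ih ⟨a, hx ha⟩)

end Aeval

section AddMonoidAlgebra

open AddMonoidAlgebra

variable {R G : Type*}

theorem support_coeff_mul_nontrivial [Semiring R] [NoZeroDivisors R] [Add G] [TwoUniqueSums G]
    {p q : R[G]} (hp : p.coeff.support.Nontrivial) (hq : q ≠ 0) :
    (p * q).coeff.support.Nontrivial := by
  have one_lt_card : 1 < p.coeff.support.card * q.coeff.support.card :=
    one_lt_mul_of_lt_of_le (Finset.one_lt_card_iff_nontrivial.mpr hp)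
      (Finset.card_pos.mpr (by simpa using hq))
  have mem_support {a b : G} (hab : (a, b) ∈ p.coeff.support ×ˢ q.coeff.support)
      (unique : UniqueAdd p.coeff.support q.coeff.support a b) :
      a + b ∈ (p * q).coeff.support := by
    obtain ⟨ha, hb⟩ := Finset.mem_product.mp hab
    rw [Finsupp.mem_support_iff] at ha hb ⊢
    rw [coeff_mul_add_of_uniqueAdd unique]
    exact mul_ne_zero ha hb
  obtain ⟨⟨a, b⟩, hab, ⟨c, d⟩, hcd, hne, unique_ab, unique_cd⟩ :=
    TwoUniqueSums.uniqueAdd_of_one_lt_card one_lt_card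
  refine ⟨a + b, mem_support hab unique_ab, c + d, mem_support hcd unique_cd, fun hsum => hne ?_⟩
  obtain ⟨hc, hd⟩ := Finset.mem_product.mp hcd
  obtain ⟨rfl, rfl⟩ := unique_ab hc hd hsum.symm
  rfl

theorem eq_zero_of_support_nontrivial_of_dvd_algebraMap [CommSemiring R] [NoZeroDivisors R]
    [AddMonoid G] [TwoUniqueSums G] {p : R[G]} (hp : p.coeff.support.Nontrivial) {r : R}
    (hr : p ∣ algebraMap R R[G] r) : r = 0 := by
  obtain ⟨q, hq⟩ := hr
  rw [coe_algebraMap, Function.comp_apply, Algebra.algebraMap_self_apply] at hq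
  have hq0 : q = 0 := by
    by_contra hne
    have h := support_coeff_mul_nontrivial hp hne
    rw [← hq, coeff_single] at h
    exact h.not_subset_singleton Finsupp.support_single_subset
  simpa [hq0] using hq

theorem statement12_general [CommRing R] [NoZeroDivisors R] [AddMonoid G] [TwoUniqueSums G]
    {p f : R[G]} (hp : p.coeff.support.Nontrivial) {n : ℕ} {g : Polynomial R}
    (hfg : p ^ n * f = Polynomial.aeval p g) :
    ∃ h : Polynomial R, g = Polynomial.X ^ n * h ∧ f = Polynomial.aeval p h := by
  have regular : IsLeftRegular p := by
    refine IsLeftCancelMulZero.mul_left_cancel_of_ne_zero ?_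
    rintro rfl
    simp at hp
  obtain ⟨h, rfl⟩ := X_pow_dvd_of_pow_dvd_aeval regular
    (fun _ => eq_zero_of_support_nontrivial_of_dvd_algebraMap hp) ⟨f, hfg.symm⟩
  rw [map_mul, map_pow, Polynomial.aeval_X] at hfg
  exact ⟨h, rfl, regular.pow n hfg⟩

end AddMonoidAlgebra

theorem support_coeff_T_add_T_nontrivial {R : Type*} [Semiring R] [Nontrivial R] {a b : ℤ}
    (hab : a ≠ b) : (T a + T b : R[T;T⁻¹]).coeff.support.Nontrivial :=
  ⟨a, by simp [hab.symm], b, by simp [hab], hab⟩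

/-- Let `δ = v + v⁻¹` in `ℤ[v,v⁻¹]`.  If `f ∈ ℤ[v,v⁻¹]` satisfies `δⁿ·f = g(δ)` for some
`n ≥ 0` and some polynomial `g` with nonnegative coefficients, then `f = h(δ)` for some
polynomial `h` with nonnegative coefficients; i.e.
`ℤ^{≥0}[δ,δ⁻¹] ∩ ℤ[v,v⁻¹] = ℤ^{≥0}[δ]`. -/
theorem statement12 (f : LaurentPolynomial ℤ) (n : ℕ) (g : Polynomial ℤ)
    (hg : ∀ i, 0 ≤ g.coeff i)
    (hfg : (T 1 + T (-1) : LaurentPolynomial ℤ) ^ n * f =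
      Polynomial.aeval (T 1 + T (-1) : LaurentPolynomial ℤ) g) :
    ∃ h : Polynomial ℤ, (∀ i, 0 ≤ h.coeff i) ∧
      f = Polynomial.aeval (T 1 + T (-1) : LaurentPolynomial ℤ) h := by
  obtain ⟨h, rfl, hf⟩ := statement12_general (support_coeff_T_add_T_nontrivial (by decide)) hfg
  exact ⟨h, fun i => by simpa only [Polynomial.coeff_X_pow_mul] using hg (i + n), hf⟩
end
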